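/- Let M be a von Neumann algebra with a faithful normal semifinite trace τ, let m_τ = {a ∈ M : τ(|a|) < ∞} be the definition ideal of τ, and let Δ : M → M be a 2-local derivation. Then for every x ∈ M and every y ∈ m_τ one has τ(Δ(x)y) = −τ(xΔ(y)). -/

import Mathlib

open scoped ENNReal NNReal

variable {H : Type*} [NormedAddCommGroup H] [InnerProductSpace ℂ H] [CompleteSpace H]

/-- Scalar multiplication is inherited by a von Neumann algebra from `B(H)`. -/
instance : SMulMemClass (VonNeumannAlgebra H) ℂ (H →L[ℂ] H) where
  smul_mem {M} c _x hx := M.toStarSubalgebra.smul_mem hx c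

/-- A map `D : M → M` is a derivation: it is `ℂ`-linear and satisfies the Leibniz rule. -/
def IsDerivation (M : VonNeumannAlgebra H) (D : M → M) : Prop :=
  (∀ x y : M, D (x + y) = D x + D y) ∧
  (∀ (c : ℂ) (x : M), D (c • x) = c • D x) ∧
  (∀ x y : M, D (x * y) = D x * y + x * D y)

/-- A map `Δ : M → M` (not assumed linear) is a 2-local derivation if for every pair `x, y`
there is a derivation agreeing with `Δ` at `x` and at `y`. -/
def Is2LocalDerivation (M : VonNeumannAlgebra H) (Δ : M → M) : Prop :=
  ∀ x y : M, ∃ D : M → M, IsDerivation M D ∧ Δ x = D x ∧ Δ y = D y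

/-- An element of a von Neumann algebra is positive if it is a positive operator on `H`. -/
def IsPos (M : VonNeumannAlgebra H) (x : M) : Prop :=
  ContinuousLinearMap.IsPositive (x : H →L[ℂ] H)

/-- The operator (Loewner) order on a von Neumann algebra: `x ≤ y` iff `y - x` is positive. -/
def OpLE (M : VonNeumannAlgebra H) (x y : M) : Prop :=
  ContinuousLinearMap.IsPositive ((y : H →L[ℂ] H) - (x : H →L[ℂ] H))

/-- A faithful normal semifinite trace on a von Neumann algebra `M`: a map on `M` which, on the
positive cone, is additive and positively homogeneous, satisfies `τ(xx⋆) = τ(x⋆x)`, is faithful,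
normal (commutes with suprema of bounded monotone increasing nets of positive elements) and
semifinite. -/
structure FNSTrace (M : VonNeumannAlgebra H) : Type _ where
  τ : M → ℝ≥0∞
  additive : ∀ x y : M, IsPos M x → IsPos M y → τ (x + y) = τ x + τ y
  pos_smul : ∀ (c : ℝ≥0) (x : M), IsPos M x → τ ((c : ℂ) • x) = c * τ x
  tracial : ∀ x : M, τ (x * star x) = τ (star x * x)
  faithful : ∀ x : M, IsPos M x → τ x = 0 → x = 0
  normal : ∀ {ι : Type} [Nonempty ι] [Preorder ι] [IsDirected ι (· ≤ ·)]
      (f : ι → M) (s : M), (∀ i, IsPos M (f i)) →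
      (∀ i j, i ≤ j → OpLE M (f i) (f j)) →
      (∀ i, OpLE M (f i) s) → (∀ u : M, (∀ i, OpLE M (f i) u) → OpLE M s u) →
      τ s = ⨆ i, τ (f i)
  semifinite : ∀ x : M, IsPos M x → x ≠ 0 →
      ∃ y : M, IsPos M y ∧ y ≠ 0 ∧ OpLE M y x ∧ τ y < ⊤

/-- `a` belongs to the definition ideal `m_τ = {a ∈ M : τ(|a|) < ∞}`, where `|a|` is the unique
positive square root of `a⋆a`. -/
def MemIdeal (M : VonNeumannAlgebra H) (τ : M → ℝ≥0∞) (a : M) : Prop :=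
  ∃ b : M, IsPos M b ∧ b * b = star a * a ∧ τ b < ⊤

/-- `σ : M → ℂ` is the extension of the trace `τ` to a linear functional on the definition
ideal `m_τ`, satisfying the tracial identity `σ(xy) = σ(yx)` for `x ∈ M`, `y ∈ m_τ`. -/
def IsTraceExtension (M : VonNeumannAlgebra H) (T : FNSTrace M) (σ : M → ℂ) : Prop :=
  (∀ x : M, IsPos M x → T.τ x < ⊤ → σ x = ((T.τ x).toReal : ℂ)) ∧
  (∀ x y : M, MemIdeal M T.τ x → MemIdeal M T.τ y → σ (x + y) = σ x + σ y) ∧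
  (∀ (c : ℂ) (x : M), MemIdeal M T.τ x → σ (c • x) = c * σ x) ∧
  (∀ x y : M, MemIdeal M T.τ y → σ (x * y) = σ (y * x))

structure TrData {A : Type*} [CStarAlgebra A] [PartialOrder A] (τ : A → ℝ≥0∞) : Prop where
  add : ∀ x y : A, 0 ≤ x → 0 ≤ y → τ (x + y) = τ x + τ y
  smul : ∀ (c : ℝ≥0) (x : A), 0 ≤ x → τ ((c : ℂ) • x) = c * τ x
  tr : ∀ x : A, τ (x * star x) = τ (star x * x)
  normal : ∀ (f : ℕ → A) (s : A), (∀ i, 0 ≤ f i) → Monotone f →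
    Filter.Tendsto f Filter.atTop (nhds s) → τ s = ⨆ i, τ (f i)

namespace TrData

open Filter Topology

variable {A : Type*} [CStarAlgebra A] [PartialOrder A] [StarOrderedRing A] {τ : A → ℝ≥0∞}

theorem mono (h : TrData τ) {a b : A} (ha : 0 ≤ a) (hab : a ≤ b) : τ a ≤ τ b := by
  have := h.add a (b - a) ha (sub_nonneg.2 hab)
  rw [add_sub_cancel] at this
  rw [this]; exact le_self_add

theorem conj_le (h : TrData τ) {a x : A} (ha : 0 ≤ a) (hx : ‖x‖ ≤ 1) :
    τ (x * a * star x) ≤ τ a := by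
  set c := CFC.sqrt a with hc
  have hc0 : 0 ≤ c := CFC.sqrt_nonneg a
  have hcs : star c = c := (IsSelfAdjoint.of_nonneg hc0)
  have hcc : c * c = a := CFC.sqrt_mul_sqrt_self a
  have e1 : x * a * star x = (x * c) * star (x * c) := by
    rw [star_mul, hcs, ← hcc]; noncomm_ring
  have e2 : star (x * c) * (x * c) = c * (star x * x) * c := by
    rw [star_mul, hcs]; noncomm_ring
  rw [e1, h.tr, e2]
  refine h.mono ?_ ?_
  · rw [← e2]; exact star_mul_self_nonneg _
  · have h1 : star x * x ≤ 1 := by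
      have := CStarAlgebra.star_mul_le_algebraMap_norm_sq (a := x)
      refine this.trans ?_
      rw [← map_one (algebraMap ℝ A)]
      apply algebraMap_mono
      nlinarith [norm_nonneg x]
    have := star_left_conjugate_le_conjugate h1 c
    rw [hcs] at this
    simpa [hcc] using this

theorem conj_lt (h : TrData τ) {a : A} (x : A) (ha : 0 ≤ a) (hta : τ a < ⊤) :
    τ (x * a * star x) < ⊤ := by
  set r : ℝ≥0 := ‖x‖₊ + 1
  have hr : (0:ℝ) < r := by positivity
  set y : A := ((r⁻¹ : ℝ≥0) : ℂ) • x
  have hy : ‖y‖ ≤ 1 := by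
    simp only [y, norm_smul]
    simp only [Complex.norm_real, NNReal.coe_inv, Complex.ofReal_inv, norm_inv]
    rw [inv_mul_le_one₀ (by simpa using hr)]
    simp [r, abs_of_nonneg, add_nonneg]
  have e : x * a * star x = ((r * r : ℝ≥0) : ℂ) • (y * a * star y) := by
    have hne : (r : ℂ) ≠ 0 := by exact_mod_cast hr.ne'
    simp only [y, star_smul, smul_mul_assoc, mul_smul_comm, smul_smul]
    simp
    field_simp
    simp
  rw [e, h.smul _ _ (by simpa using star_right_conjugate_nonneg ha y)]
  exact ENNReal.mul_lt_top ENNReal.coe_lt_top ((h.conj_le ha hy).trans_lt hta)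

/-- soft thresholding -/
noncomputable def P (δ : ℝ) (b : A) : A := cfc (fun t : ℝ => max (t - δ) 0) b

theorem P_nonneg (δ : ℝ) (b : A) : 0 ≤ P δ b := cfc_nonneg (fun _ _ => le_max_right _ _)

theorem P_le {δ : ℝ} (hδ : 0 ≤ δ) {b : A} (hb : 0 ≤ b) : P δ b ≤ b := by
  conv_rhs => rw [← cfc_id ℝ b]
  unfold P
  refine cfc_mono (fun t ht => ?_) 
  have := spectrum_nonneg_of_nonneg hb ht
  simp; constructor <;> linarith

theorem P_sub_norm {δ : ℝ} (hδ : 0 ≤ δ) {b : A} (hb : 0 ≤ b) : ‖P δ b - b‖ ≤ δ := by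
  have : P δ b - b = cfc (fun t : ℝ => max (t - δ) 0 - t) b := by
    rw [cfc_sub (fun t : ℝ => max (t - δ) 0) (fun t => t) b, cfc_id' ℝ b]; rfl
  rw [this]
  refine norm_cfc_le hδ (fun t ht => ?_)
  have := spectrum_nonneg_of_nonneg hb ht
  rw [Real.norm_eq_abs, abs_le]
  constructor
  · linarith [le_max_left (t - δ) 0]
  · have : max (t-δ) 0 ≤ t := by simp; constructor <;> linarith
    linarith

noncomputable def ep (n : ℕ) : ℝ := 1 / ((n : ℝ) + 1)

theorem ep_pos (n : ℕ) : 0 < ep n := by unfold ep; positivity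

theorem ep_tendsto : Tendsto ep atTop (𝓝 0) := tendsto_one_div_add_atTop_nhds_zero_nat

theorem ep_anti : Antitone ep := fun m n h => by
  unfold ep; gcongr

theorem P_tendsto {b : A} (hb : 0 ≤ b) : Tendsto (fun n => P (ep n) b) atTop (𝓝 b) := by
  rw [tendsto_iff_norm_sub_tendsto_zero]
  exact squeeze_zero (fun _ => norm_nonneg _) (fun n => P_sub_norm (ep_pos n).le hb) ep_tendsto

theorem P_iSup (h : TrData τ) {b : A} (hb : 0 ≤ b) : τ b = ⨆ n, τ (P (ep n) b) := by
  refine h.normal _ _ (fun n => P_nonneg _ _) (fun m n hmn => ?_) (P_tendsto hb)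
  refine cfc_mono (fun t ht => ?_)
  have := ep_anti hmn
  gcongr

theorem le_of_P (h : TrData τ) {b : A} (hb : 0 ≤ b) {C : ℝ≥0∞}
    (H : ∀ δ : ℝ, 0 < δ → τ (P δ b) ≤ C) : τ b ≤ C := by
  rw [h.P_iSup hb]
  exact iSup_le fun n => H _ (ep_pos n)

/-- The trace norm. -/
noncomputable def N (τ : A → ℝ≥0∞) (z : A) : ℝ≥0∞ := τ (CFC.abs z)

theorem norm_mul_eq (z F : A) : ‖z * F‖ = ‖CFC.abs z * F‖ := by
  have hs : star (CFC.abs z) = CFC.abs z := IsSelfAdjoint.of_nonneg (CFC.abs_nonneg z)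
  have : star (z * F) * (z * F) = star (CFC.abs z * F) * (CFC.abs z * F) := by
    calc star (z * F) * (z * F) = star F * (star z * z) * F := by
          rw [star_mul]; noncomm_ring
      _ = _ := by rw [← CFC.abs_mul_abs z, star_mul, hs]; noncomm_ring
  have h2 : ‖z * F‖ * ‖z * F‖ = ‖CFC.abs z * F‖ * ‖CFC.abs z * F‖ := by
    rw [← CStarRing.norm_star_mul_self, this, CStarRing.norm_star_mul_self]
  nlinarith [norm_nonneg (z * F), norm_nonneg (CFC.abs z * F), mul_self_inj (norm_nonneg (z * F)) (norm_nonneg (CFC.abs z * F))]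

theorem exists_F {b : A} (hb : 0 ≤ b) :
    ∃ F : ℕ → A, Tendsto (fun n => b * F n) atTop (𝓝 (CFC.sqrt b)) := by
  refine ⟨fun n => cfc (fun t : ℝ => √t / (|t| + ep n)) b, ?_⟩
  have hbs : IsSelfAdjoint b := .of_nonneg hb
  rw [tendsto_iff_norm_sub_tendsto_zero]
  have h0 : Tendsto (fun n => √(ep n)) atTop (𝓝 0) := by
    simpa using ep_tendsto.sqrt
  refine squeeze_zero (fun _ => norm_nonneg _) (fun n => ?_) h0
  have hc : Continuous (fun t : ℝ => √t / (|t| + ep n)) := by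
    refine Continuous.div (by fun_prop) (by fun_prop) (fun t => ?_)
    have := ep_pos n; positivity
  have e : b * cfc (fun t : ℝ => √t / (|t| + ep n)) b - CFC.sqrt b
      = cfc (fun t : ℝ => t * (√t / (|t| + ep n)) - √t) b := by
    rw [CFC.sqrt_eq_real_sqrt b, cfcₙ_eq_cfc, cfc_sub _ _ b, cfc_mul _ _ b (by fun_prop) hc.continuousOn, cfc_id' ℝ b]
  rw [e]
  refine norm_cfc_le (by positivity) (fun t ht => ?_)
  have ht := spectrum_nonneg_of_nonneg hb ht
  have hp := ep_pos n
  rw [abs_of_nonneg ht, Real.norm_eq_abs]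
  have : t * (√t / (t + ep n)) - √t = - (√t * ep n / (t + ep n)) := by
    field_simp; ring
  rw [this, abs_neg, abs_of_nonneg (by positivity), div_le_iff₀ (by positivity)]
  obtain ⟨x, hx, rfl⟩ : ∃ x : ℝ, 0 ≤ x ∧ x ^ 2 = t := ⟨√t, by positivity, Real.sq_sqrt ht⟩
  obtain ⟨y, hy, hye⟩ : ∃ y : ℝ, 0 ≤ y ∧ y ^ 2 = ep n := ⟨√(ep n), by positivity, Real.sq_sqrt hp.le⟩
  rw [← hye, Real.sqrt_sq hx, Real.sqrt_sq hy]
  nlinarith [mul_nonneg hx hy, sq_nonneg (x - y), mul_nonneg hy (sq_nonneg (x-y)), mul_nonneg hy (mul_nonneg hx hy), mul_nonneg hy (sq_nonneg x), mul_nonneg hy (sq_nonneg y)]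

theorem exists_factor (z : A) : ∃ v c : A, z = v * c ∧ star v * v = CFC.abs z ∧
    c * c = CFC.abs z ∧ star c = c := by
  have hb := CFC.abs_nonneg z
  obtain ⟨F, hF⟩ := exists_F hb
  set b := CFC.abs z with hbdef
  set c := CFC.sqrt b
  have hcc : c * c = b := CFC.sqrt_mul_sqrt_self b
  have hcs : star c = c := IsSelfAdjoint.of_nonneg (CFC.sqrt_nonneg b)
  have hbs : star b = b := IsSelfAdjoint.of_nonneg hb
  have hcau : CauchySeq (fun n => z * F n) := by
    have := hF.cauchySeq
    rw [Metric.cauchySeq_iff] at this ⊢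
    simp only [dist_eq_norm, ← mul_sub, norm_mul_eq z, ← hbdef] at this ⊢
    exact this
  obtain ⟨v, hv⟩ := cauchySeq_tendsto_of_complete hcau
  refine ⟨v, c, ?_, ?_, hcc, hcs⟩
  · have h1 : Tendsto (fun n => z * F n * c) atTop (𝓝 (v * c)) := hv.mul_const c
    have h2 : Tendsto (fun n => z * F n * c) atTop (𝓝 z) := by
      rw [tendsto_iff_norm_sub_tendsto_zero]
      have h3 : Tendsto (fun n => b * F n * c - b) atTop (𝓝 0) := by
        have := (hF.mul_const c).sub_const b
        simpa [hcc] using this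
      have h4 := h3.norm
      rw [norm_zero] at h4
      refine h4.congr (fun n => ?_)
      have e1 : b * F n * c - b = b * (F n * c - 1) := by noncomm_ring
      have e2 : z * F n * c - z = z * (F n * c - 1) := by noncomm_ring
      rw [e1, e2, norm_mul_eq z]
    exact tendsto_nhds_unique h2 h1
  · have h1 : Tendsto (fun n => star (z * F n) * (z * F n)) atTop (𝓝 (star v * v)) :=
      hv.star.mul hv
    have h2 : Tendsto (fun n => star (b * F n) * (b * F n)) atTop (𝓝 (star c * c)) :=
      hF.star.mul hF
    rw [hcs, hcc] at h2
    refine tendsto_nhds_unique h1 (h2.congr fun n => ?_)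
    calc star (b * F n) * (b * F n) = star (F n) * (b * b) * F n := by
          rw [star_mul, hbs]; noncomm_ring
      _ = _ := by rw [hbdef, CFC.abs_mul_abs z, star_mul]; noncomm_ring

end TrData

namespace TrData

open Filter Topology

variable {A : Type*} [CStarAlgebra A] [PartialOrder A] [StarOrderedRing A] {τ : A → ℝ≥0∞}

def TQ (τ : A → ℝ≥0∞) (C : ℝ≥0∞) (z : A) : Prop :=
  ∀ u : A, ‖u‖ ≤ 1 → ∃ q : A, 0 ≤ q ∧ τ q ≤ C + C ∧ u * z + star (u * z) ≤ q

theorem TQ_add (h : TrData τ) {C C' : ℝ≥0∞} {z w : A} (hz : TQ τ C z) (hw : TQ τ C' w) :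
    TQ τ (C + C') (z + w) := by
  intro u hu
  obtain ⟨q, hq, hqC, hqu⟩ := hz u hu
  obtain ⟨p, hp, hpC, hpu⟩ := hw u hu
  refine ⟨q + p, add_nonneg hq hp, ?_, ?_⟩
  · rw [h.add _ _ hq hp]
    calc _ ≤ (C + C) + (C' + C') := add_le_add hqC hpC
      _ = _ := by ring
  · calc u * (z + w) + star (u * (z + w)) = (u * z + star (u * z)) + (u * w + star (u * w)) := by
          rw [mul_add, star_add]; abel
      _ ≤ _ := add_le_add hqu hpu

theorem TQ_mul (h : TrData τ) {C : ℝ≥0∞} {a b : A} (ha : τ (a * star a) ≤ C)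
    (hb : τ (star b * b) ≤ C) : TQ τ C (a * b) := by
  intro u hu
  refine ⟨u * (a * star a) * star u + star b * b, ?_, ?_, ?_⟩
  · exact add_nonneg (by simpa using star_right_conjugate_nonneg (mul_star_self_nonneg a) u)
      (star_mul_self_nonneg b)
  · rw [h.add _ _ (star_right_conjugate_nonneg (mul_star_self_nonneg a) u)
      (star_mul_self_nonneg b)]
    exact add_le_add ((h.conj_le (mul_star_self_nonneg a) hu).trans ha) hb
  · have := mul_star_self_nonneg (u * a - star b)
    rw [← sub_nonneg]
    convert this using 1
    simp only [star_sub, star_mul, star_star]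
    noncomm_ring

theorem N_le_of_pos (h : TrData τ) {C : ℝ≥0∞} {z : A}
    (hz : ∀ u : A, ‖u‖ ≤ 1 → 0 ≤ u * z → τ (u * z) ≤ C) : N τ z ≤ C := by
  have hb := CFC.abs_nonneg z
  refine h.le_of_P hb (fun ε hε => ?_)
  set b := CFC.abs z with hbd
  set g : ℝ → ℝ := fun t => 1 / (|t| + ε) with hg
  have hgc : Continuous g := by
    refine Continuous.div (by fun_prop) (by fun_prop) (fun t => ?_)
    positivity
  set G := cfc g b with hG
  have hGs : star G = G := (cfc_predicate g b : IsSelfAdjoint G)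
  set u := G * star z with hu
  have hn : ‖u‖ ≤ 1 := by
    have e : u = star (z * G) := by rw [star_mul, hGs]
    rw [e, norm_star, norm_mul_eq z, ← hbd]
    have e2 : b * G = cfc (fun t => t * g t) b := by
      rw [cfc_mul _ _ b (by fun_prop) hgc.continuousOn, cfc_id' ℝ b]
    rw [e2]
    refine norm_cfc_le zero_le_one (fun t ht => ?_)
    have ht := spectrum_nonneg_of_nonneg hb ht
    simp only [hg, abs_of_nonneg ht]
    rw [Real.norm_eq_abs, abs_of_nonneg (by positivity), mul_one_div, div_le_one (by positivity)]
    linarith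
  have e : u * z = cfc (fun t => g t * (t * t)) b := by
    rw [cfc_mul _ _ b hgc.continuousOn (by fun_prop), cfc_mul _ _ b, cfc_id' ℝ b, hbd, CFC.abs_mul_abs,
      ← hbd, hu, mul_assoc]
  have hP : P ε b ≤ u * z := by
    rw [e]
    refine cfc_mono (fun t ht => ?_) (by fun_prop) (by fun_prop)
    have ht := spectrum_nonneg_of_nonneg hb ht
    simp only [hg, abs_of_nonneg ht]
    rw [one_div_mul_eq_div, le_div_iff₀ (by positivity)]
    rcases le_total (t - ε) 0 with h1 | h1
    · rw [max_eq_right h1]; nlinarith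
    · rw [max_eq_left h1]; nlinarith
  have h0 := P_nonneg ε b
  exact (h.mono h0 hP).trans (hz u hn (h0.trans hP))

theorem N_le_of_TQ (h : TrData τ) {C : ℝ≥0∞} {z : A} (hz : TQ τ C z) : N τ z ≤ C := by
  refine h.N_le_of_pos (fun u hn h0 => ?_)
  obtain ⟨q, hq, hqC, hqu⟩ := hz u hn
  have es : star (u * z) = u * z := IsSelfAdjoint.of_nonneg h0
  rw [es] at hqu
  have := (h.mono (add_nonneg h0 h0) hqu).trans hqC
  rw [h.add _ _ h0 h0, ← two_mul, ← two_mul] at this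
  exact (ENNReal.mul_le_mul_iff_right (by simp) (by simp)).1 this

theorem TQ_of_N (h : TrData τ) {C : ℝ≥0∞} {z : A} (hz : N τ z ≤ C) : TQ τ C z := by
  obtain ⟨v, c, e, hv, hc, hcs⟩ := exists_factor z
  rw [e]
  exact h.TQ_mul (by rwa [h.tr, hv]) (by rwa [hcs, hc])

theorem N_mul_le (h : TrData τ) {C : ℝ≥0∞} {a b : A} (ha : τ (a * star a) ≤ C)
    (hb : τ (star b * b) ≤ C) : N τ (a * b) ≤ C := h.N_le_of_TQ (h.TQ_mul ha hb)

theorem N_add (h : TrData τ) (z w : A) : N τ (z + w) ≤ N τ z + N τ w :=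
  h.N_le_of_TQ (h.TQ_add (h.TQ_of_N le_rfl) (h.TQ_of_N le_rfl))

theorem N_nonneg {z : A} (hz : 0 ≤ z) : N τ z = τ z := by
  unfold N; rw [CFC.abs_of_nonneg z hz]

theorem N_star (h : TrData τ) (z : A) : N τ (star z) ≤ N τ z := by
  obtain ⟨v, c, e, hv, hc, hcs⟩ := exists_factor z
  have : star z = c * star v := by rw [e, star_mul, hcs]
  conv_lhs => rw [this]
  refine h.N_mul_le ?_ ?_
  · rw [hcs, hc]; rfl
  · rw [star_star, h.tr, hv]; rfl

theorem N_mul_left (h : TrData τ) (x : A) {z : A} (hz : N τ z < ⊤) : N τ (x * z) < ⊤ := by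
  obtain ⟨v, c, e, hv, hc, hcs⟩ := exists_factor z
  rw [e, ← mul_assoc]
  have h1 : τ (v * star v) < ⊤ := by rw [h.tr, hv]; exact hz
  have h2 : τ (star c * c) < ⊤ := by rw [hcs, hc]; exact hz
  have h3 : τ (x * v * star (x * v)) < ⊤ := by
    have := h.conj_lt x (mul_star_self_nonneg v) h1
    convert this using 2
    rw [star_mul]; noncomm_ring
  exact (h.N_mul_le (le_max_left _ _) (le_max_right _ _)).trans_lt (max_lt h3 h2)

theorem N_mul_right (h : TrData τ) (x : A) {z : A} (hz : N τ z < ⊤) : N τ (z * x) < ⊤ := by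
  have := h.N_mul_left (star x) ((h.N_star z).trans_lt hz)
  have := (h.N_star _).trans_lt this
  simpa using this

theorem N_smul (h : TrData τ) (c : ℂ) {z : A} (hz : N τ z < ⊤) : N τ (c • z) < ⊤ := by
  have := h.N_mul_left (c • (1 : A)) hz
  simpa using this

theorem N_neg (z : A) : N τ (-z) = N τ z := by
  unfold N; rw [CFC.abs_neg]

theorem N_mul_left_le (h : TrData τ) {x : A} (hx : ‖x‖ ≤ 1) (z : A) : N τ (x * z) ≤ N τ z := by
  refine h.N_le_of_TQ (fun u hu => ?_)
  have := h.TQ_of_N (le_refl (N τ z)) (u * x) (by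
    calc _ ≤ ‖u‖ * ‖x‖ := norm_mul_le _ _
      _ ≤ 1 := mul_le_one₀ hu (norm_nonneg _) hx)
  simpa only [mul_assoc] using this

/-- lower semicontinuity, up to a factor 2 -/
theorem N_lsc (h : TrData τ) {C : ℝ≥0∞} {f : ℕ → A} {a : A} (hf : Tendsto f atTop (𝓝 a))
    (hC : ∀ n, N τ (f n) ≤ C) : N τ a ≤ 2 * C := by
  have hb := CFC.abs_nonneg a
  refine h.le_of_P hb (fun δ hδ => ?_)
  have hlim : Tendsto (fun n => CFC.abs (f n)) atTop (𝓝 (CFC.abs a)) :=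
    (CFC.continuous_abs.tendsto a).comp hf
  set b := CFC.abs a with hbd
  set g : ℝ → ℝ := fun t => √(max (t - δ) 0 / max t δ) with hg
  have hpos : ∀ t, 0 < max t δ := fun t => lt_max_of_lt_right hδ
  have hgc : Continuous g := by
    refine Real.continuous_sqrt.comp (Continuous.div (by fun_prop) (by fun_prop) (fun t => (hpos t).ne'))
  have hg2 : ∀ t, g t * g t = max (t - δ) 0 / max t δ := fun t =>
    Real.mul_self_sqrt (div_nonneg (le_max_right _ _) (hpos t).le)
  set G := cfc g b with hG
  have hGs : star G = G := (cfc_predicate g b : IsSelfAdjoint G)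
  have hGn : ‖G‖ ≤ 1 := by
    refine norm_cfc_le zero_le_one (fun t ht => ?_)
    rw [Real.norm_eq_abs, abs_of_nonneg (Real.sqrt_nonneg _), Real.sqrt_le_left zero_le_one, one_pow,
      div_le_one (hpos t)]
    have := le_max_left t δ
    have := le_max_right t δ
    exact max_le (by linarith) (by linarith)
  have e1 : G * b * G = P δ b := by
    have : G * b * G = cfc (fun t => g t * t * g t) b := by
      rw [cfc_mul _ _ b (by fun_prop) hgc.continuousOn, cfc_mul _ _ b hgc.continuousOn, cfc_id' ℝ b]
    rw [this]
    refine cfc_congr (fun t ht => ?_)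
    have ht := spectrum_nonneg_of_nonneg hb ht
    have e : g t * t * g t = t * (g t * g t) := by ring
    simp only [e, hg2]
    rcases le_total t δ with h1 | h1
    · rw [max_eq_right (by linarith : t - δ ≤ 0)]; simp
    · rw [max_eq_left h1]
      have : t ≠ 0 := by linarith
      field_simp
  have e2 : G * G ≤ (1 / δ : ℝ) • P δ b := by
    have e3 : G * G = cfc (fun t => g t * g t) b := by
      rw [cfc_mul _ _ b hgc.continuousOn hgc.continuousOn]
    have e4 : (1 / δ : ℝ) • P δ b = cfc (fun t => (1 / δ) • max (t - δ) 0) b := by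
      unfold P; rw [← cfc_smul (1 / δ) _ b]
    rw [e3, e4]
    refine cfc_mono (fun t ht => ?_) (by fun_prop) (by fun_prop)
    rw [hg2, smul_eq_mul, one_div_mul_eq_div]
    exact div_le_div_of_nonneg_left (le_max_right _ _) hδ (le_max_right _ _)
  obtain ⟨n, hn⟩ := ((tendsto_iff_norm_sub_tendsto_zero.1 hlim).eventually_lt_const
    (half_pos hδ)).exists
  set bn := CFC.abs (f n)
  have hbn := CFC.abs_nonneg (f n)
  have hle : b ≤ bn + algebraMap ℝ A (δ / 2) := by
    have hsa : IsSelfAdjoint (b - bn) := (IsSelfAdjoint.of_nonneg hb).sub (.of_nonneg hbn)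
    have h1 := hsa.le_algebraMap_norm_self
    rw [norm_sub_rev] at h1
    have h2 : algebraMap ℝ A ‖bn - b‖ ≤ algebraMap ℝ A (δ / 2) := algebraMap_mono A hn.le
    rw [add_comm, ← sub_le_iff_le_add]
    exact h1.trans h2
  have hPle : P δ b ≤ G * bn * G + (1 / 2 : ℝ) • P δ b := by
    have := star_left_conjugate_le_conjugate hle G
    rw [hGs, e1] at this
    refine this.trans ?_
    rw [mul_add, add_mul]
    gcongr
    calc G * algebraMap ℝ A (δ / 2) * G = (δ / 2) • (G * G) := by
          rw [Algebra.algebraMap_eq_smul_one]; simp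
      _ ≤ (δ / 2) • ((1 / δ : ℝ) • P δ b) := by
          exact smul_le_smul_of_nonneg_left e2 (by positivity)
      _ = _ := by rw [smul_smul]; congr 1; field_simp
  have h0 := P_nonneg δ b
  have h3 : P δ b ≤ G * bn * G + G * bn * G := by
    have h5 : (1 / 2 : ℝ) • P δ b ≤ G * bn * G := by
      have : P δ b = (1 / 2 : ℝ) • P δ b + (1 / 2 : ℝ) • P δ b := by
        rw [← add_smul]; norm_num
      have h6 : (1 / 2 : ℝ) • P δ b + (1 / 2 : ℝ) • P δ b ≤ G * bn * G + (1 / 2 : ℝ) • P δ b := by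
        rw [← this]; exact hPle
      exact le_of_add_le_add_right h6
    have : P δ b = (1 / 2 : ℝ) • P δ b + (1 / 2 : ℝ) • P δ b := by
        rw [← add_smul]; norm_num
    rw [this]
    exact add_le_add h5 h5
  have h4 : 0 ≤ G * bn * G := by
    have := star_right_conjugate_nonneg hbn G
    rwa [hGs] at this
  have h5 : τ (G * bn * G) ≤ C := by
    have := h.conj_le hbn hGn
    rw [hGs] at this
    exact this.trans (hC n)
  refine (h.mono h0 h3).trans ?_
  rw [h.add _ _ h4 h4, two_mul]
  exact add_le_add h5 h5

end TrData

structure SData {A : Type*} [CStarAlgebra A] [PartialOrder A] [StarOrderedRing A]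
    (τ : A → ℝ≥0∞) (σ : A → ℂ) : Prop where
  pos : ∀ x : A, 0 ≤ x → τ x < ⊤ → σ x = ((τ x).toReal : ℂ)
  add : ∀ x y : A, TrData.N τ x < ⊤ → TrData.N τ y < ⊤ → σ (x + y) = σ x + σ y
  smul : ∀ (c : ℂ) (x : A), TrData.N τ x < ⊤ → σ (c • x) = c * σ x
  comm : ∀ x y : A, TrData.N τ y < ⊤ → σ (x * y) = σ (y * x)

namespace SData

open Filter Topology TrData

variable {A : Type*} [CStarAlgebra A] [PartialOrder A] [StarOrderedRing A] {τ : A → ℝ≥0∞}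
  {σ : A → ℂ}

theorem neg (hs : SData τ σ) {x : A} (hx : N τ x < ⊤) : σ (-x) = -σ x := by
  have := hs.smul (-1) x hx
  simpa using this

theorem N_sub (h : TrData τ) {x y : A} (hx : N τ x < ⊤) (hy : N τ y < ⊤) : N τ (x - y) < ⊤ := by
  rw [sub_eq_add_neg]
  exact (h.N_add _ _).trans_lt (ENNReal.add_lt_top.2 ⟨hx, by rwa [N_neg]⟩)

theorem N_add' (h : TrData τ) {x y : A} (hx : N τ x < ⊤) (hy : N τ y < ⊤) : N τ (x + y) < ⊤ :=
  (h.N_add _ _).trans_lt (ENNReal.add_lt_top.2 ⟨hx, hy⟩)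

theorem sub (hs : SData τ σ) {x y : A} (hx : N τ x < ⊤) (hy : N τ y < ⊤) :
    σ (x - y) = σ x - σ y := by
  rw [sub_eq_add_neg, hs.add _ _ hx (by rwa [N_neg]), hs.neg hy, sub_eq_add_neg]

theorem real (h : TrData τ) (hs : SData τ σ) {w : A} (hw : IsSelfAdjoint w) (hN : N τ w < ⊤) :
    (σ w).im = 0 := by
  have h1 := CFC.posPart_add_negPart w hw
  have h2 : w⁺ - w⁻ = w := CFC.posPart_sub_negPart w hw
  have hp : 0 ≤ w⁺ := CFC.posPart_nonneg w
  have hn : 0 ≤ w⁻ := CFC.negPart_nonneg w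
  have hp' : τ w⁺ < ⊤ := by
    refine (h.mono hp ?_).trans_lt hN
    rw [← h1]; exact le_add_of_nonneg_right hn
  have hn' : τ w⁻ < ⊤ := by
    refine (h.mono hn ?_).trans_lt hN
    rw [← h1]; exact le_add_of_nonneg_left hp
  rw [← h2, hs.sub (by rwa [N_nonneg hp]) (by rwa [N_nonneg hn]), hs.pos _ hp hp', hs.pos _ hn hn']
  simp

theorem σ_star (h : TrData τ) (hs : SData τ σ) {z : A} (hz : N τ z < ⊤) :
    σ (star z) = (starRingEnd ℂ) (σ z) := by
  have hz' : N τ (star z) < ⊤ := (h.N_star z).trans_lt hz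
  have h1 := hs.real h (w := z + star z) (by simp [IsSelfAdjoint, add_comm]) (N_add' h hz hz')
  have h2 := hs.real h (w := Complex.I • (z - star z)) (by
    simp [IsSelfAdjoint, ← smul_neg]) (h.N_smul _ (N_sub h hz hz'))
  rw [hs.add _ _ hz hz'] at h1
  rw [hs.smul _ _ (N_sub h hz hz'), hs.sub hz hz'] at h2
  simp at h1 h2
  apply Complex.ext <;> simp <;> linarith

theorem norm_one_le' : ‖(1 : A)‖ ≤ 1 := by
  rcases subsingleton_or_nontrivial A with h | h
  · rw [Subsingleton.elim (1 : A) 0]; simp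
  · simp

theorem bound (h : TrData τ) (hs : SData τ σ) {z : A} (hz : N τ z < ⊤) :
    ‖σ z‖ ≤ (N τ z).toReal := by
  obtain ⟨θ, hθ, hθz⟩ : ∃ θ : ℂ, ‖θ‖ = 1 ∧ θ * σ z = ‖σ z‖ := by
    by_cases h0 : σ z = 0
    · exact ⟨1, by simp, by simp [h0]⟩
    · have : (‖σ z‖ : ℂ) ≠ 0 := by simpa using h0
      refine ⟨(starRingEnd ℂ) (σ z) / ‖σ z‖, by simp [h0], ?_⟩
      rw [div_mul_eq_mul_div, Complex.conj_mul', div_eq_iff this]; ring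
  obtain ⟨q, hq, hqC, hqu⟩ := h.TQ_of_N (le_refl (N τ z)) (θ • (1 : A)) (by
    rw [norm_smul, hθ, one_mul]; exact norm_one_le')
  have hq' : τ q < ⊤ := hqC.trans_lt (ENNReal.add_lt_top.2 ⟨hz, hz⟩)
  rw [smul_mul_assoc, one_mul] at hqu
  have hw := h.N_smul θ hz
  have hw' : N τ (star (θ • z)) < ⊤ := (h.N_star _).trans_lt hw
  have hww := N_add' h hw hw'
  have hqN : N τ q < ⊤ := by rwa [N_nonneg hq]
  have hd : 0 ≤ q - (θ • z + star (θ • z)) := sub_nonneg.2 hqu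
  have h1 := hs.pos _ hd (by rw [← N_nonneg (τ := τ) hd]; exact N_sub h hqN hww)
  rw [hs.sub hqN hww, hs.add _ _ hw hw', hs.σ_star h hw, hs.smul _ _ hz, hθz, hs.pos _ hq hq'] at h1
  have h2 := congrArg Complex.re h1
  simp at h2
  have h3 : 0 ≤ (τ (q - (θ • z + star (θ • z)))).toReal := ENNReal.toReal_nonneg
  have h4 : (τ q).toReal ≤ (N τ z).toReal + (N τ z).toReal := by
    rw [← ENNReal.toReal_add hz.ne hz.ne]
    exact ENNReal.toReal_mono (ENNReal.add_lt_top.2 ⟨hz, hz⟩).ne hqC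
  simp only [star_smul, Complex.star_def] at h3
  linarith

theorem bound_mul (h : TrData τ) (hs : SData τ σ) (x : A) {z : A} (hz : N τ z < ⊤) :
    ‖σ (x * z)‖ ≤ ‖x‖ * (N τ z).toReal := by
  by_cases hx : ‖x‖ = 0
  · have : x = 0 := norm_eq_zero.1 hx
    have h0 : σ 0 = 0 := by
      have := hs.smul 0 z hz
      simpa using this
    simp [this, h0]
  · set y : A := ((‖x‖⁻¹ : ℝ) : ℂ) • x
    have hxy : x = (‖x‖ : ℂ) • y := by
      have : (‖x‖ : ℂ) ≠ 0 := by exact_mod_cast hx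
      simp only [y, smul_smul, Complex.ofReal_inv, mul_inv_cancel₀ this, one_smul]
    have hy : ‖y‖ ≤ 1 := by
      simp only [y, norm_smul, Complex.norm_real, norm_inv, norm_norm]
      exact (inv_mul_cancel₀ hx).le
    conv_lhs => rw [hxy]
    rw [smul_mul_assoc, hs.smul _ _ (h.N_mul_left y hz), norm_mul, Complex.norm_real, norm_norm]
    gcongr
    exact (hs.bound h (h.N_mul_left y hz)).trans (ENNReal.toReal_mono hz.ne (h.N_mul_left_le hy z))

theorem N_le_of_σ (h : TrData τ) (hs : SData τ σ) {z : A} (hz : N τ z < ⊤) {C : ℝ}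
    (H : ∀ u : A, ‖u‖ ≤ 1 → ‖σ (u * z)‖ ≤ C) : N τ z ≤ ENNReal.ofReal C := by
  refine h.N_le_of_pos (fun u hu h0 => ?_)
  have h1 : τ (u * z) < ⊤ := by rw [← N_nonneg (τ := τ) h0]; exact h.N_mul_left u hz
  have h2 := H u hu
  rw [hs.pos _ h0 h1] at h2
  rw [← ENNReal.ofReal_toReal h1.ne]
  apply ENNReal.ofReal_le_ofReal
  simpa using h2

/-- the functional `x ↦ σ (x k)` -/
noncomputable def phi (h : TrData τ) (hs : SData τ σ) (k : A) (hk : N τ k < ⊤) : A →L[ℂ] ℂ :=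
  LinearMap.mkContinuous
    { toFun := fun x => σ (x * k)
      map_add' := fun x y => by
        rw [add_mul, hs.add _ _ (h.N_mul_left x hk) (h.N_mul_left y hk)]
      map_smul' := fun c x => by
        rw [smul_mul_assoc, hs.smul _ _ (h.N_mul_left x hk)]; rfl }
    (N τ k).toReal (fun x => by
      rw [mul_comm]; exact hs.bound_mul h x hk)

theorem phi_apply (h : TrData τ) (hs : SData τ σ) (k : A) (hk : N τ k < ⊤) (x : A) :
    phi h hs k hk x = σ (x * k) := rfl

theorem deriv_zero (h : TrData τ) (hs : SData τ σ) (D : A →L[ℂ] A)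
    (hD : ∀ x y, D (x * y) = D x * y + x * D y) {k b : A} (hk : N τ k < ⊤)
    (hb : IsSelfAdjoint b) (hkb : Commute k b) : σ (D b * k) = 0 := by
  let _ : NormedAlgebra ℚ A := NormedAlgebra.restrictScalars ℚ ℂ A
  set U : ℝ → A := fun t => NormedSpace.exp (t • (Complex.I • b)) with hU
  have hUadd : ∀ s t, U (s + t) = U s * U t := fun s t => by
    simp only [hU, add_smul]
    exact NormedSpace.exp_add_of_commute
      (((Commute.refl (Complex.I • b)).smul_left s).smul_right t)
  have hU0 : U 0 = 1 := by simp [hU]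
  have hUinv : ∀ t, U t * U (-t) = 1 := fun t => by rw [← hUadd]; simp [hU0]
  have hUn : ∀ t, ‖U t‖ ≤ 1 := fun t => by
    have hst : star (U t) = U (-t) := by
      simp only [hU]
      rw [NormedSpace.star_exp]
      congr 1
      simp [hb.star_eq]
    have h1 : ‖U (-t)‖ * ‖U (-t)‖ ≤ 1 := by
      rw [← CStarRing.norm_star_mul_self, ← hst, star_star, hst, hUinv]
      exact norm_one_le'
    rw [← hst, norm_star] at h1
    nlinarith [norm_nonneg (U t)]
  have hUk : ∀ t, k * U t = U t * k := fun t => by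
    have : Commute k (t • (Complex.I • b)) := (hkb.smul_right _).smul_right _
    exact this.exp_right
  set φ := phi h hs k hk with hφ
  set G : ℝ → ℂ := fun t => φ (U (-t) * D (U t)) with hG
  have hconj : ∀ s X, φ (U (-s) * X * U s) = φ X := fun s X => by
    simp only [hφ, phi_apply]
    have e : U (-s) * X * U s * k = U (-s) * (X * k * U s) := by
      rw [mul_assoc _ (U s) k, ← hUk]; simp only [mul_assoc]
    rw [e, hs.comm _ _ (h.N_mul_right _ (h.N_mul_left X hk)), mul_assoc (X * k), hUinv, mul_one]
  have hGadd : ∀ s t, G (t + s) = G t + G s := fun s t => by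
    have e : U (-(t + s)) * D (U (t + s)) =
        U (-s) * (U (-t) * D (U t)) * U s + U (-s) * D (U s) := by
      have h1 : U (-t) * U t = 1 := by simpa using hUinv (-t)
      rw [hUadd t s, hD, neg_add_rev, hUadd (-s) (-t)]
      calc U (-s) * U (-t) * (D (U t) * U s + U t * D (U s))
          = U (-s) * (U (-t) * D (U t)) * U s + U (-s) * (U (-t) * U t) * D (U s) := by
            noncomm_ring
        _ = _ := by rw [h1, mul_one]
    simp only [hG]
    rw [e, map_add, hconj]
  have hGn : ∀ t (n : ℕ), G (n * t) = n * G t := fun t n => by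
    induction n with
    | zero =>
      have := hGadd 0 0
      simp at this
      simp [this]
    | succ n ih =>
      push_cast
      rw [add_mul, one_mul, hGadd, ih]; ring
  have hGb : ∀ t, ‖G t‖ ≤ ‖φ‖ * ‖D‖ := fun t => by
    refine (φ.le_opNorm _).trans ?_
    gcongr
    refine (norm_mul_le _ _).trans ?_
    calc _ ≤ 1 * (‖D‖ * ‖U t‖) := by
          gcongr
          · exact hUn _
          · exact D.le_opNorm _
      _ ≤ 1 * (‖D‖ * 1) := by gcongr; exact hUn _
      _ = _ := by ring
  have hG0 : ∀ t, G t = 0 := fun t => by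
    by_contra hne
    have hpos : 0 < ‖G t‖ := norm_pos_iff.2 hne
    obtain ⟨n, hn⟩ := exists_nat_gt (‖φ‖ * ‖D‖ / ‖G t‖)
    rw [div_lt_iff₀ hpos] at hn
    have := hGb (n * t)
    rw [hGn, norm_mul] at this
    simp at this
    linarith
  have hD1 : D 1 = 0 := by
    have := hD 1 1
    simpa using this
  have hdU : HasDerivAt U (Complex.I • b) 0 := by
    have := hasDerivAt_exp_smul_const (𝕂 := ℝ) (Complex.I • b) (0 : ℝ)
    simpa using this
  have hdU' : HasDerivAt (fun t => U (-t)) (-(Complex.I • b)) 0 := by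
    have h1 : HasDerivAt U (Complex.I • b) (-0) := by simpa using hdU
    have := h1.scomp (0 : ℝ) (hasDerivAt_neg (0 : ℝ))
    rw [neg_smul, one_smul] at this
    exact this
  have hdD : HasDerivAt (fun t => D (U t)) (D (Complex.I • b)) 0 :=
    (D.restrictScalars ℝ).hasFDerivAt.comp_hasDerivAt (0 : ℝ) hdU
  have hdm := hdU'.mul hdD
  have hdG : HasDerivAt G (φ (D (Complex.I • b))) 0 := by
    have := (φ.restrictScalars ℝ).hasFDerivAt.comp_hasDerivAt (0 : ℝ) hdm
    have e : φ (D (Complex.I • b)) =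
        (φ.restrictScalars ℝ) (-(Complex.I • b) * D (U 0) + U (-0) * D (Complex.I • b)) := by
      simp [hU0, hD1]
    rw [e]
    exact this
  have hdG' : HasDerivAt G 0 0 := by
    have : G = fun _ => 0 := funext hG0
    rw [this]; exact hasDerivAt_const _ _
  have := hdG.unique hdG'
  simpa [hφ, phi_apply] using this

end SData

namespace SData

open Filter Topology TrData

variable {A : Type*} [CStarAlgebra A] [PartialOrder A] [StarOrderedRing A] {τ : A → ℝ≥0∞}
  {σ : A → ℂ}

/-- `D z` lies in the ideal and has zero trace. -/
def Good (τ : A → ℝ≥0∞) (σ : A → ℂ) (D : A →L[ℂ] A) (z : A) : Prop :=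
  N τ (D z) < ⊤ ∧ σ (D z) = 0

theorem Good.comb (h : TrData τ) (hs : SData τ σ) (D : A →L[ℂ] A) {z w : A}
    (hz : Good τ σ D z) (hw : Good τ σ D w) (c d : ℂ) : Good τ σ D (c • z + d • w) := by
  have h1 := h.N_smul c hz.1
  have h2 := h.N_smul d hw.1
  refine ⟨?_, ?_⟩
  · rw [map_add, map_smul, map_smul]; exact N_add' h h1 h2
  · rw [map_add, map_smul, map_smul, hs.add _ _ h1 h2, hs.smul _ _ hz.1, hs.smul _ _ hw.1,
      hz.2, hw.2]; simp

theorem good_of_sa (h : TrData τ) (hs : SData τ σ) (D : A →L[ℂ] A) {z : A}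
    (h1 : Good τ σ D (z + star z)) (h2 : Good τ σ D (Complex.I • (z - star z))) :
    Good τ σ D z := by
  have := Good.comb h hs D h1 h2 (1 / 2) (-Complex.I / 2)
  convert this using 1
  rw [smul_smul]
  have : -Complex.I / 2 * Complex.I = 1 / 2 := by
    rw [div_mul_eq_mul_div, neg_mul, Complex.I_mul_I, neg_neg]
  rw [this, ← smul_add]
  have : z + star z + (z - star z) = (2 : ℂ) • z := by rw [two_smul]; abel
  rw [this, smul_smul]; norm_num

theorem nice_sa (h : TrData τ) (hs : SData τ σ) (D : A →L[ℂ] A)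
    (hD : ∀ x y, D (x * y) = D x * y + x * D y) {k b : A} (hk : N τ k < ⊤)
    (hks : IsSelfAdjoint k) (hb : IsSelfAdjoint b) (hbk : b * k = b) : Good τ σ D b := by
  have hkb : k * b = b := by
    have := congrArg star hbk
    rwa [star_mul, hks.star_eq, hb.star_eq] at this
  have hcom : Commute k b := hkb.trans hbk.symm
  have hbN : N τ b < ⊤ := by rw [← hbk]; exact h.N_mul_left b hk
  have e : D b = D b * k + b * D k := by
    conv_lhs => rw [← hbk, hD]
  have h1 := h.N_mul_left (D b) hk
  have h2 := h.N_mul_right (D k) hbN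
  constructor
  · rw [e]; exact N_add' h h1 h2
  · rw [e, hs.add _ _ h1 h2, hs.deriv_zero h D hD hk hb hcom, ← hs.comm _ _ hbN,
      hs.deriv_zero h D hD hbN hks hcom.symm]; simp

theorem nice (h : TrData τ) (hs : SData τ σ) (D : A →L[ℂ] A)
    (hD : ∀ x y, D (x * y) = D x * y + x * D y) {k b : A} (hk : N τ k < ⊤)
    (hks : IsSelfAdjoint k) (hbk : b * k = b) (hkb : k * b = b) : Good τ σ D b := by
  have hs1 : star b * k = star b := by
    have := congrArg star hkb
    rwa [star_mul, hks.star_eq] at this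
  apply good_of_sa h hs D
  · exact hs.nice_sa h D hD hk hks (by simp [IsSelfAdjoint, add_comm]) (by rw [add_mul, hbk, hs1])
  · exact hs.nice_sa h D hD hk hks (by simp [IsSelfAdjoint, ← smul_neg])
      (by rw [smul_mul_assoc, sub_mul, hbk, hs1])

theorem sand (h : TrData τ) (hs : SData τ σ) (D : A →L[ℂ] A)
    (hD : ∀ x y, D (x * y) = D x * y + x * D y) {k s : A} (hk : N τ k < ⊤)
    (hks : IsSelfAdjoint k) (hss : IsSelfAdjoint s) (hsk : s * k = s) (u : A) :
    σ (u * D (s * s)) = - σ (D u * (s * s)) := by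
  have hks' : k * s = s := by
    have := congrArg star hsk
    rwa [star_mul, hks.star_eq, hss.star_eq] at this
  have hsN : N τ s < ⊤ := by rw [← hsk]; exact h.N_mul_left s hk
  have hssN := h.N_mul_left s hsN
  have hg := hs.nice h D hD hk hks (b := s * s) (by rw [mul_assoc, hsk])
    (by rw [← mul_assoc, hks'])
  have hw := hs.nice h D hD hk hks (b := s * (u * s)) (by rw [mul_assoc, mul_assoc, hsk])
    (by rw [← mul_assoc, hks'])
  have hus := h.N_mul_left u hsN
  have e1 : σ (D (u * s * s)) = σ (D (s * (u * s))) := by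
    rw [hD, hD s, hs.add _ _ (h.N_mul_left _ hsN) (h.N_mul_right _ hus),
      hs.add _ _ (h.N_mul_left _ hus) (h.N_mul_right _ hsN), hs.comm _ s hsN, ← hs.comm _ _ hus]
    ring
  have e2 : D (u * s * s) = D u * (s * s) + u * D (s * s) := by rw [mul_assoc, hD]
  rw [e2, hw.2, hs.add _ _ (h.N_mul_left _ hssN) (h.N_mul_left _ hg.1)] at e1
  linear_combination e1

theorem nice_P (h : TrData τ) (hs : SData τ σ) (D : A →L[ℂ] A)
    (hD : ∀ x y, D (x * y) = D x * y + x * D y) {y : A} (hy : 0 ≤ y) (hyt : τ y < ⊤)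
    {ε : ℝ} (hε : 0 < ε) :
    Good τ σ D (P ε y) ∧ N τ (D (P ε y)) ≤ ENNReal.ofReal (‖D‖ * (τ y).toReal) := by
  set k : A := cfc (fun t : ℝ => min 1 (t / ε)) y with hkd
  set s : A := cfc (fun t : ℝ => √(max (t - ε) 0)) y with hsd
  have hks : IsSelfAdjoint k := cfc_predicate _ y
  have hss : IsSelfAdjoint s := cfc_predicate _ y
  have hk0 : 0 ≤ k := cfc_nonneg (fun t ht => by
    have ht := spectrum_nonneg_of_nonneg hy ht
    positivity)
  have hkle : k ≤ ((Real.toNNReal (1 / ε) : ℝ≥0) : ℂ) • y := by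
    have : ((Real.toNNReal (1 / ε) : ℝ≥0) : ℂ) • y = (1 / ε : ℝ) • y := by
      rw [Real.coe_toNNReal _ (by positivity)]
      exact Complex.coe_smul _ _
    rw [this]
    have e : (1 / ε : ℝ) • y = cfc (fun t : ℝ => (1 / ε) • t) y := by
      rw [cfc_smul (1 / ε) (fun t : ℝ => t) y, cfc_id' ℝ y]
    rw [e]
    refine cfc_mono (fun t ht => ?_)
    simp only [smul_eq_mul]
    exact (min_le_right _ _).trans (by rw [one_div_mul_eq_div])
  have hkN : N τ k < ⊤ := by
    rw [N_nonneg hk0]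
    refine (h.mono hk0 hkle).trans_lt ?_
    rw [h.smul _ _ hy]
    exact ENNReal.mul_lt_top ENNReal.coe_lt_top hyt
  have hsk : s * k = s := by
    rw [hsd, hkd, ← cfc_mul _ _ y]
    refine cfc_congr (fun t ht => ?_)
    rcases le_total t ε with h1 | h1
    · rw [max_eq_right (by linarith : t - ε ≤ 0)]; simp
    · rw [min_eq_left ((one_le_div hε).2 h1), mul_one]
  have hPs : s * s = P ε y := by
    rw [hsd, ← cfc_mul _ _ y]
    refine cfc_congr (fun t ht => ?_)
    exact Real.mul_self_sqrt (le_max_right _ _)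
  have hP0 := P_nonneg ε y
  have hPt : τ (P ε y) ≤ τ y := h.mono hP0 (P_le hε.le hy)
  have hPN : N τ (P ε y) < ⊤ := by rw [N_nonneg hP0]; exact hPt.trans_lt hyt
  have hg : Good τ σ D (P ε y) := hs.nice_sa h D hD hkN hks (.of_nonneg hP0)
    (by rw [← hPs, mul_assoc, hsk])
  refine ⟨hg, hs.N_le_of_σ h hg.1 (fun u hu => ?_)⟩
  have := hs.sand h D hD hkN hks hss hsk u
  rw [hPs] at this
  rw [this, norm_neg]
  refine (hs.bound_mul h _ hPN).trans ?_
  have h1 : ‖D u‖ ≤ ‖D‖ := (D.le_opNorm u).trans (mul_le_of_le_one_right (norm_nonneg _) hu)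
  rw [N_nonneg hP0]
  gcongr
  exact hyt.ne

theorem N_D_pos (h : TrData τ) (hs : SData τ σ) (D : A →L[ℂ] A)
    (hD : ∀ x y, D (x * y) = D x * y + x * D y) {y : A} (hy : 0 ≤ y) (hyt : τ y < ⊤) :
    N τ (D y) ≤ 2 * ENNReal.ofReal (‖D‖ * (τ y).toReal) :=
  h.N_lsc (f := fun n => D (P (ep n) y)) ((D.continuous.tendsto y).comp (P_tendsto hy))
    (fun n => (hs.nice_P h D hD hy hyt (ep_pos n)).2)

theorem good_pos (h : TrData τ) (hs : SData τ σ) (D : A →L[ℂ] A)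
    (hD : ∀ x y, D (x * y) = D x * y + x * D y) {y : A} (hy : 0 ≤ y) (hyt : τ y < ⊤) :
    Good τ σ D y := by
  have hlt : ∀ r : ℝ, 2 * ENNReal.ofReal r < ⊤ := fun r =>
    ENNReal.mul_lt_top (by simp) ENNReal.ofReal_lt_top
  refine ⟨(hs.N_D_pos h D hD hy hyt).trans_lt (hlt _), ?_⟩
  set m := ‖σ (D y)‖ with hm
  set K := 2 * ‖D‖ + 1 with hK
  have hKpos : 0 < K := by positivity
  have key : ∀ n, (τ (P (ep n) y)).toReal ≤ (τ y).toReal - m / K := fun n => by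
    have hP0 := P_nonneg (ep n) y
    have hPle : P (ep n) y ≤ y := P_le (ep_pos n).le hy
    have hd0 : 0 ≤ y - P (ep n) y := sub_nonneg.2 hPle
    have hPt : τ (P (ep n) y) < ⊤ := (h.mono hP0 hPle).trans_lt hyt
    have hadd := h.add _ _ hP0 hd0
    rw [add_sub_cancel] at hadd
    have hdt : τ (y - P (ep n) y) < ⊤ := by
      refine lt_of_le_of_lt ?_ hyt
      rw [hadd]; exact le_add_self
    have hr : (τ y).toReal = (τ (P (ep n) y)).toReal + (τ (y - P (ep n) y)).toReal := by
      conv_lhs => rw [hadd]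
      exact ENNReal.toReal_add hPt.ne hdt.ne
    have hg := (hs.nice_P h D hD hy hyt (ep_pos n)).1
    have hN := hs.N_D_pos h D hD hd0 hdt
    have hNt := hN.trans_lt (hlt _)
    have e : σ (D y) = σ (D (y - P (ep n) y)) := by
      conv_lhs => rw [← add_sub_cancel (P (ep n) y) y, map_add, hs.add _ _ hg.1 hNt, hg.2, zero_add]
    have hb := hs.bound h hNt
    rw [← e, ← hm] at hb
    have hb2 := ENNReal.toReal_mono (hlt _).ne hN
    rw [ENNReal.toReal_mul, ENNReal.toReal_ofReal (by positivity)] at hb2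
    have hq : 0 ≤ (τ (y - P (ep n) y)).toReal := ENNReal.toReal_nonneg
    have : m / K ≤ (τ (y - P (ep n) y)).toReal := by
      rw [div_le_iff₀ hKpos]
      have h2 : (2:ℝ≥0∞).toReal = 2 := by simp
      rw [h2] at hb2
      rw [hK]; nlinarith
    linarith
  have h1 : τ y ≤ ENNReal.ofReal ((τ y).toReal - m / K) := by
    conv_lhs => rw [h.P_iSup hy]
    refine iSup_le fun n => ?_
    have hPt : τ (P (ep n) y) < ⊤ :=
      (h.mono (P_nonneg _ _) (P_le (ep_pos n).le hy)).trans_lt hyt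
    rw [← ENNReal.ofReal_toReal hPt.ne]
    exact ENNReal.ofReal_le_ofReal (key n)
  have h2 := ENNReal.toReal_mono ENNReal.ofReal_ne_top h1
  rw [ENNReal.toReal_ofReal (ENNReal.toReal_nonneg.trans (key 0))] at h2
  have h3 : m / K ≤ 0 := by linarith
  have h4 : m ≤ 0 := by
    rw [div_le_iff₀ hKpos] at h3; simpa using h3
  exact norm_le_zero_iff.1 h4

theorem good_sa (h : TrData τ) (hs : SData τ σ) (D : A →L[ℂ] A)
    (hD : ∀ x y, D (x * y) = D x * y + x * D y) {w : A} (hw : IsSelfAdjoint w)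
    (hN : N τ w < ⊤) : Good τ σ D w := by
  have h1 := CFC.posPart_add_negPart w hw
  have h2 : w⁺ - w⁻ = w := CFC.posPart_sub_negPart w hw
  have hp : 0 ≤ w⁺ := CFC.posPart_nonneg w
  have hn : 0 ≤ w⁻ := CFC.negPart_nonneg w
  have hp' : τ w⁺ < ⊤ := by
    refine (h.mono hp ?_).trans_lt hN
    rw [← h1]; exact le_add_of_nonneg_right hn
  have hn' : τ w⁻ < ⊤ := by
    refine (h.mono hn ?_).trans_lt hN
    rw [← h1]; exact le_add_of_nonneg_left hp
  have := Good.comb h hs D (hs.good_pos h D hD hp hp') (hs.good_pos h D hD hn hn') 1 (-1)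
  rwa [one_smul, neg_one_smul, ← sub_eq_add_neg, h2] at this

theorem good (h : TrData τ) (hs : SData τ σ) (D : A →L[ℂ] A)
    (hD : ∀ x y, D (x * y) = D x * y + x * D y) {z : A} (hz : N τ z < ⊤) : Good τ σ D z := by
  have hz' : N τ (star z) < ⊤ := (h.N_star z).trans_lt hz
  apply good_of_sa h hs D
  · exact hs.good_sa h D hD (by simp [IsSelfAdjoint, add_comm]) (N_add' h hz hz')
  · exact hs.good_sa h D hD (by simp [IsSelfAdjoint, ← smul_neg])
      (h.N_smul _ (N_sub h hz hz'))

theorem main (h : TrData τ) (hs : SData τ σ) (D : A →L[ℂ] A)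
    (hD : ∀ x y, D (x * y) = D x * y + x * D y) (x : A) {y : A} (hy : N τ y < ⊤) :
    σ (D x * y) = - σ (x * D y) := by
  have h1 := (hs.good h D hD (h.N_mul_left x hy)).2
  rw [hD, hs.add _ _ (h.N_mul_left _ hy) (h.N_mul_left _ (hs.good h D hD hy).1)] at h1
  exact eq_neg_of_add_eq_zero_left h1

end SData

namespace AutoCont

open Filter Topology

variable {A : Type*} [CStarAlgebra A] [PartialOrder A] [StarOrderedRing A]

theorem cross_le {e c : A} (he : IsSelfAdjoint e) (hc : IsSelfAdjoint c) {d : ℝ} (hd : 0 < d) :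
    e * c + c * e ≤ algebraMap ℝ A d + (‖e‖ ^ 2 / d) • (c * c) := by
  have h1 : 0 ≤ star (algebraMap ℝ A d - e * c) * (algebraMap ℝ A d - e * c) :=
    star_mul_self_nonneg _
  have h2 : star c * (star e * e) * c ≤ star c * algebraMap ℝ A (‖e‖ ^ 2) * c :=
    star_left_conjugate_le_conjugate CStarAlgebra.star_mul_le_algebraMap_norm_sq c
  rw [he.star_eq, hc.star_eq] at h2
  rw [star_sub, star_mul, he.star_eq, hc.star_eq] at h1
  have h3 : star (algebraMap ℝ A d) = algebraMap ℝ A d := by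
    rw [← algebraMap_star_comm]; simp
  rw [h3] at h1
  simp only [Algebra.algebraMap_eq_smul_one] at *
  have h4 : d • (e * c + c * e) ≤ d • (d • (1:A) + (‖e‖ ^ 2 / d) • (c * c)) := by
    rw [← sub_nonneg] at h2 ⊢
    have := add_nonneg h1 h2
    convert this using 1
    simp only [mul_sub, sub_mul, smul_sub, smul_add, smul_smul, mul_smul_comm, smul_mul_assoc,
      mul_one, one_mul, mul_assoc]
    rw [mul_div_cancel₀ _ hd.ne']
    abel
  have h5 := smul_le_smul_of_nonneg_left h4 (inv_pos.2 hd).le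
  simpa only [smul_smul, inv_mul_cancel₀ hd.ne', one_smul] using h5

theorem upper {E : A →ₗ[ℂ] A} (hE : ∀ x y, E (x * y) = E x * y + x * E y)
    (hst : ∀ x, E (star x) = star (E x)) {x : A} (hx : IsSelfAdjoint x)
    (hr : ‖x + E x‖ < ‖x‖) : ∃ s, 0 ≤ s ∧ s < ‖x‖ ∧ x ≤ algebraMap ℝ A s := by
  set r := ‖x + E x‖ with hrdef
  have hr0 : 0 ≤ r := norm_nonneg _
  set n := ‖x‖
  have hE1 : E 1 = 0 := by
    have := hE 1 1
    simpa using this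
  have hEx : IsSelfAdjoint (E x) := by
    rw [IsSelfAdjoint, ← hst, hx.star_eq]
  set h := algebraMap ℝ A n - x with hh
  have hh0 : 0 ≤ h := sub_nonneg.2 hx.le_algebraMap_norm_self
  set c := CFC.sqrt h
  have hc0 : 0 ≤ c := CFC.sqrt_nonneg h
  have hcs : IsSelfAdjoint c := IsSelfAdjoint.of_nonneg hc0
  have hcc : c * c = h := CFC.sqrt_mul_sqrt_self h
  have hes : IsSelfAdjoint (E c) := by
    rw [IsSelfAdjoint, ← hst, hcs.star_eq]
  have hEh : E h = - E x := by
    rw [hh, map_sub, Algebra.algebraMap_eq_smul_one,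
      show (n • (1:A)) = (n : ℂ) • (1:A) from (Complex.coe_smul n (1:A)).symm, map_smul, hE1]
    simp
  obtain ⟨d, hd, hd2⟩ : ∃ d, 0 < d ∧ r + d < n := ⟨(n - r) / 2, by linarith, by linarith⟩
  have h1 := cross_le hes hcs hd
  set K := ‖E c‖ ^ 2 / d
  have hK : 0 ≤ K := by positivity
  rw [← hE, hcc, hEh] at h1
  have h2 : x + E x ≤ algebraMap ℝ A r := (hx.add hEx).le_algebraMap_norm_self
  have h3 := add_le_add h1 h2
  refine ⟨(r + d + K * n) / (1 + K), by positivity, ?_, ?_⟩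
  · rw [div_lt_iff₀ (by positivity)]; nlinarith
  · have h4 : (1 + K) • x ≤ (r + d + K * n) • (1 : A) := by
      rw [← sub_nonneg] at h3 ⊢
      convert h3 using 1
      rw [hh]
      simp only [Algebra.algebraMap_eq_smul_one, add_smul, mul_smul, smul_sub, one_smul]
      abel
    have h5 := smul_le_smul_of_nonneg_left h4 (inv_pos.2 (by positivity : 0 < 1 + K)).le
    rw [smul_smul, inv_mul_cancel₀ (by positivity), one_smul, smul_smul] at h5
    rw [Algebra.algebraMap_eq_smul_one, div_eq_inv_mul]
    exact h5

theorem norm_le_of_bounds {x : A} {s : ℝ} (hs : 0 ≤ s) (h1 : x ≤ algebraMap ℝ A s)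
    (h2 : -x ≤ algebraMap ℝ A s) (hx : IsSelfAdjoint x) : ‖x‖ ≤ s := by
  rcases subsingleton_or_nontrivial A with hA | hA
  · rw [Subsingleton.elim x 0, norm_zero]; exact hs
  rcases CStarAlgebra.norm_or_neg_norm_mem_spectrum hx with h | h
  · exact (le_algebraMap_iff_spectrum_le (a := x) (r := s)).1 h1 _ h
  · have : ‖x‖ ∈ spectrum ℝ (-x) := by
      rw [← spectrum.neg_eq]; simpa using h
    exact (le_algebraMap_iff_spectrum_le (a := -x) (r := s)).1 h2 _ this

theorem dissip {E : A →ₗ[ℂ] A} (hE : ∀ x y, E (x * y) = E x * y + x * E y)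
    (hst : ∀ x, E (star x) = star (E x)) {x : A} (hx : IsSelfAdjoint x) :
    ‖x‖ ≤ ‖x + E x‖ := by
  by_contra! hr
  obtain ⟨s, hs, hsn, h1⟩ := upper hE hst hx hr
  obtain ⟨t, ht, htn, h2⟩ := upper hE hst hx.neg (by
    rw [map_neg, ← neg_add, norm_neg, norm_neg]; exact hr)
  rw [norm_neg] at htn
  have := norm_le_of_bounds (s := max s t) (hs.trans (le_max_left _ _))
    (h1.trans (algebraMap_mono _ (le_max_left _ _)))
    (h2.trans (algebraMap_mono _ (le_max_right _ _))) hx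
  exact absurd this (not_le.2 (max_lt hsn htn))

theorem dissip_smul {E : A →ₗ[ℂ] A} (hE : ∀ x y, E (x * y) = E x * y + x * E y)
    (hst : ∀ x, E (star x) = star (E x)) {x : A} (hx : IsSelfAdjoint x) (l : ℝ) :
    ‖x‖ ≤ ‖x + (l : ℂ) • E x‖ := by
  have := dissip (E := (l : ℂ) • E) (fun x y => by
    simp [hE, smul_add]) (fun x => by
    simp [hst]) hx
  simpa using this

theorem closed_sa {E : A →ₗ[ℂ] A} (hE : ∀ x y, E (x * y) = E x * y + x * E y)
    (hst : ∀ x, E (star x) = star (E x)) {u : ℕ → A} (hu : ∀ n, IsSelfAdjoint (u n)) {y : A}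
    (h0 : Tendsto u atTop (𝓝 0)) (hy : Tendsto (fun n => E (u n)) atTop (𝓝 y)) : y = 0 := by
  have hys : IsSelfAdjoint y := by
    have h1 : Tendsto (fun n => star (E (u n))) atTop (𝓝 (star y)) := hy.star
    refine tendsto_nhds_unique h1 ?_
    convert hy using 2 with n
    rw [← hst, (hu n).star_eq]
  -- inequality before the limit
  have key : ∀ l : ℝ, l ≠ 0 → ‖y‖ ≤ ‖(-y) + (l : ℂ) • E (-y) + y‖ := by
    intro l hl
    have hlC : (l : ℂ) ≠ 0 := by exact_mod_cast hl
    have h1 : ∀ n, ‖-y + ((l⁻¹ : ℝ) : ℂ) • u n‖ ≤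
        ‖(-y + ((l⁻¹ : ℝ) : ℂ) • u n) + ((l : ℂ) • E (-y) + E (u n))‖ := by
      intro n
      have hsa : IsSelfAdjoint (-y + ((l⁻¹ : ℝ) : ℂ) • u n) := by
        refine hys.neg.add ?_
        rw [IsSelfAdjoint, star_smul, (hu n).star_eq]; simp
      have := dissip_smul hE hst hsa l
      convert this using 3
      rw [map_add, smul_add, map_smul, smul_smul]
      simp [hlC]
    have hL : Tendsto (fun n => ‖-y + ((l⁻¹ : ℝ) : ℂ) • u n‖) atTop
        (𝓝 ‖-y + ((l⁻¹ : ℝ) : ℂ) • (0:A)‖) := (tendsto_const_nhds.add (h0.const_smul _)).norm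
    have hR : Tendsto (fun n => ‖(-y + ((l⁻¹ : ℝ) : ℂ) • u n) + ((l : ℂ) • E (-y) + E (u n))‖) atTop
        (𝓝 ‖(-y + ((l⁻¹ : ℝ) : ℂ) • (0:A)) + ((l : ℂ) • E (-y) + y)‖) :=
      ((tendsto_const_nhds.add (h0.const_smul _)).add (tendsto_const_nhds.add hy)).norm
    have := le_of_tendsto_of_tendsto' hL hR h1
    rw [smul_zero, add_zero, norm_neg] at this
    rwa [add_assoc]
  have key2 : ∀ n : ℕ, ‖y‖ ≤ 1 / ((n : ℝ) + 1) * ‖E y‖ := by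
    intro n
    have hp : (0:ℝ) < 1 / ((n : ℝ) + 1) := Nat.one_div_pos_of_nat
    have := key _ hp.ne'
    rw [neg_add_eq_sub, sub_add_cancel, norm_smul, map_neg, norm_neg, Complex.norm_real,
      Real.norm_of_nonneg hp.le] at this
    exact this
  have h3 : Tendsto (fun n : ℕ => 1 / ((n : ℝ) + 1) * ‖E y‖) atTop (𝓝 (0 * ‖E y‖)) :=
    tendsto_one_div_add_atTop_nhds_zero_nat.mul_const _
  rw [zero_mul] at h3
  have h4 := ge_of_tendsto' h3 key2
  exact norm_le_zero_iff.1 h4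

theorem closed_re {E : A →ₗ[ℂ] A} (hE : ∀ x y, E (x * y) = E x * y + x * E y)
    (hst : ∀ x, E (star x) = star (E x)) {u : ℕ → A} {y : A}
    (h0 : Tendsto u atTop (𝓝 0)) (hy : Tendsto (fun n => E (u n)) atTop (𝓝 y)) :
    y + star y = 0 := by
  refine closed_sa hE hst (u := fun n => u n + star (u n)) (fun n => ?_) ?_ ?_
  · exact IsSelfAdjoint.add_star_self _
  · simpa using h0.add h0.star
  · simp only [map_add, hst]
    exact hy.add hy.star

theorem continuous_star {E : A →ₗ[ℂ] A} (hE : ∀ x y, E (x * y) = E x * y + x * E y)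
    (hst : ∀ x, E (star x) = star (E x)) : Continuous E := by
  refine E.continuous_of_seq_closed_graph fun u x y hu hy => ?_
  have hu0 : Tendsto (fun n => u n - x) atTop (𝓝 0) := by
    simpa using hu.sub_const x
  have hy0 : Tendsto (fun n => E (u n - x)) atTop (𝓝 (y - E x)) := by
    simp only [map_sub]
    exact hy.sub_const _
  set z := y - E x with hz
  have h1 := closed_re hE hst hu0 hy0
  have h2 := closed_re hE hst (u := fun n => Complex.I • (u n - x)) (y := Complex.I • z)
    (by simpa using hu0.const_smul Complex.I) (by
      simp only [map_smul]
      exact hy0.const_smul Complex.I)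
  rw [star_smul] at h2
  have h3 : Complex.I • (z - star z) = 0 := by
    rw [smul_sub, ← h2]; simp [sub_eq_add_neg]
  have h4 : z - star z = 0 := (smul_eq_zero.1 h3).resolve_left Complex.I_ne_zero
  have h5 : (2:ℂ) • z = 0 := by
    rw [two_smul]
    calc z + z = (z + star z) + (z - star z) := by abel
      _ = 0 := by rw [h1, h4, add_zero]
  have h6 : z = 0 := (smul_eq_zero.1 h5).resolve_left two_ne_zero
  exact sub_eq_zero.1 h6

theorem continuous_deriv {D : A →ₗ[ℂ] A} (hD : ∀ x y, D (x * y) = D x * y + x * D y) :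
    Continuous D := by
  let Ds : A →ₗ[ℂ] A :=
    { toFun := fun x => star (D (star x))
      map_add' := fun x y => by simp
      map_smul' := fun c x => by simp }
  have hDs : ∀ x, Ds x = star (D (star x)) := fun x => rfl
  have hDsm : ∀ x y, Ds (x * y) = Ds x * y + x * Ds y := by
    intro x y
    simp only [hDs, star_mul, hD, star_add, star_star]
    rw [add_comm]
  have c1 : Continuous (D + Ds) := by
    refine continuous_star (fun x y => ?_) (fun x => ?_)
    · simp only [LinearMap.add_apply, hD, hDsm, add_mul, mul_add]; abel
    · simp only [LinearMap.add_apply, hDs, star_add, star_star]; rw [add_comm]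
  have c2 : Continuous (Complex.I • (D - Ds)) := by
    refine continuous_star (fun x y => ?_) (fun x => ?_)
    · simp only [LinearMap.smul_apply, LinearMap.sub_apply, hD, hDsm, smul_mul_assoc, mul_smul_comm,
        ← smul_add]
      congr 1
      rw [sub_mul, mul_sub]; abel
    · simp only [LinearMap.smul_apply, LinearMap.sub_apply, hDs, star_smul, star_sub, star_star]
      simp only [Complex.star_def, Complex.conj_I, neg_smul, smul_sub]
      abel
  have e : (D : A → A) = fun x => (2:ℂ)⁻¹ •
      ((D + Ds) x - Complex.I • (Complex.I • (D - Ds)) x) := by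
    ext x
    simp only [LinearMap.smul_apply, LinearMap.sub_apply, LinearMap.add_apply, smul_smul,
      Complex.I_mul_I, neg_smul, one_smul, sub_neg_eq_add]
    rw [show D x + Ds x + (D x - Ds x) = (2:ℂ) • D x by rw [two_smul]; abel, smul_smul]
    simp
  rw [e]
  exact (c1.sub (c2.const_smul _)).const_smul _

end AutoCont

namespace VNTrace

open Filter Topology

variable {H : Type*} [NormedAddCommGroup H] [InnerProductSpace ℂ H] [CompleteSpace H]

theorem closed (M : VonNeumannAlgebra H) : IsClosed (M : Set (H →L[ℂ] H)) := by
  have h := M.centralizer_centralizer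
  rw [← h]
  exact Set.isClosed_centralizer _

noncomputable instance cstar (M : VonNeumannAlgebra H) : CStarAlgebra M :=
  StarSubalgebra.cstarAlgebra M (h_closed := closed M)

/-- The inclusion of `M` in `B(H)`. -/
noncomputable def incl (M : VonNeumannAlgebra H) : M →⋆ₐ[ℂ] (H →L[ℂ] H) where
  toFun x := x
  map_one' := rfl
  map_mul' _ _ := rfl
  map_zero' := rfl
  map_add' _ _ := rfl
  commutes' _ := rfl
  map_star' _ := rfl

theorem nonneg_iff (M : VonNeumannAlgebra H) (x : M) : 0 ≤ x ↔ IsPos M x := by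
  have : (0 : M) ≤ x ↔ (0 : H →L[ℂ] H) ≤ (x : H →L[ℂ] H) := Iff.rfl
  rw [this, ContinuousLinearMap.nonneg_iff_isPositive]; rfl

theorem le_iff (M : VonNeumannAlgebra H) (x y : M) : x ≤ y ↔ OpLE M x y := Iff.rfl

instance ordered (M : VonNeumannAlgebra H) : StarOrderedRing M := by
  refine StarOrderedRing.of_nonneg_iff' (fun {x y} hxy z => ?_) (fun x => ?_)
  · have h : (x : H →L[ℂ] H) ≤ y := hxy
    have : (z : H →L[ℂ] H) + x ≤ z + y := by gcongr
    exact this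
  · constructor
    · intro h
      have hp : ContinuousLinearMap.IsPositive (x : H →L[ℂ] H) := (nonneg_iff M x).1 h
      have hsa : IsSelfAdjoint x := Subtype.ext hp.isSelfAdjoint
      have hsp : SpectrumRestricts x ContinuousMap.realToNNReal := by
        rw [SpectrumRestricts.nnreal_iff]
        intro t ht
        have h2 := hp.spectrumRestricts
        rw [SpectrumRestricts.nnreal_iff] at h2
        refine h2 t ?_
        have := hsa.map_spectrum_real (incl M) Subtype.val_injective
        rw [← this] at ht
        exact ht
      obtain ⟨p, hp1, -, hp3⟩ :=
        CFC.exists_sqrt_of_isSelfAdjoint_of_quasispectrumRestricts hsa hsp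
      exact ⟨p, by rw [hp1.star_eq, hp3]⟩
    · rintro ⟨s, rfl⟩
      have : (0 : H →L[ℂ] H) ≤ star (s : H →L[ℂ] H) * s := star_mul_self_nonneg _
      exact this

theorem trData (M : VonNeumannAlgebra H) (T : FNSTrace M) : TrData T.τ where
  add x y hx hy := T.additive x y ((nonneg_iff M x).1 hx) ((nonneg_iff M y).1 hy)
  smul c x hx := T.pos_smul c x ((nonneg_iff M x).1 hx)
  tr := T.tracial
  normal f s hf hmono hlim := by
    refine T.normal f s (fun i => (nonneg_iff M _).1 (hf i)) (fun i j hij => hmono hij) ?_ ?_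
    · intro i
      rw [← le_iff]
      have h1 : Tendsto (fun n => f n - f i) atTop (𝓝 (s - f i)) := hlim.sub_const _
      rw [← sub_nonneg]
      exact (CStarAlgebra.isClosed_nonneg (A := M)).mem_of_tendsto h1
        (eventually_atTop.2 ⟨i, fun n hn => sub_nonneg.2 (hmono hn)⟩)
    · intro u hu
      rw [← le_iff]
      have h1 : Tendsto (fun n => u - f n) atTop (𝓝 (u - s)) := hlim.const_sub _
      rw [← sub_nonneg]
      exact (CStarAlgebra.isClosed_nonneg (A := M)).mem_of_tendsto h1
        (Eventually.of_forall fun n => sub_nonneg.2 ((le_iff M _ _).2 (hu n)))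

theorem memIdeal_iff (M : VonNeumannAlgebra H) (τ : M → ℝ≥0∞) (a : M) :
    MemIdeal M τ a ↔ TrData.N τ a < ⊤ := by
  constructor
  · rintro ⟨b, hb, hbb, ht⟩
    have : CFC.abs a = b := CFC.sqrt_unique hbb ((nonneg_iff M b).2 hb)
    rw [TrData.N, this]; exact ht
  · intro h
    exact ⟨CFC.abs a, (nonneg_iff M _).1 (CFC.abs_nonneg a), CFC.abs_mul_abs a, h⟩

theorem sData (M : VonNeumannAlgebra H) (T : FNSTrace M) (σ : M → ℂ)
    (hσ : IsTraceExtension M T σ) : SData T.τ σ where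
  pos x hx := hσ.1 x ((nonneg_iff M x).1 hx)
  add x y hx hy := hσ.2.1 x y ((memIdeal_iff M _ _).2 hx) ((memIdeal_iff M _ _).2 hy)
  smul c x hx := hσ.2.2.1 c x ((memIdeal_iff M _ _).2 hx)
  comm x y hy := hσ.2.2.2 x y ((memIdeal_iff M _ _).2 hy)

theorem deriv_identity (M : VonNeumannAlgebra H) (T : FNSTrace M) (σ : M → ℂ)
    (hσ : IsTraceExtension M T σ) (D : M → M) (hD : IsDerivation M D)
    (x y : M) (hy : MemIdeal M T.τ y) : σ (D x * y) = - σ (x * D y) := by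
  let D0 : M →ₗ[ℂ] M := { toFun := D, map_add' := hD.1, map_smul' := hD.2.1 }
  have hD0 : ∀ x y, D0 (x * y) = D0 x * y + x * D0 y := hD.2.2
  let D1 : M →L[ℂ] M := ⟨D0, AutoCont.continuous_deriv hD0⟩
  exact (sData M T σ hσ).main (trData M T) D1 hD0 x ((memIdeal_iff M _ _).1 hy)

end VNTrace

/-- For a 2-local derivation `Δ` on a von Neumann algebra with faithful normal semifinite
trace `τ`, one has `τ(Δ(x)y) = -τ(xΔ(y))` for all `x ∈ M` and `y ∈ m_τ`. -/
theorem twoLocalDerivation_trace_identity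
    (M : VonNeumannAlgebra H) (T : FNSTrace M) (σ : M → ℂ)
    (hσ : IsTraceExtension M T σ)
    (Δ : M → M) (hΔ : Is2LocalDerivation M Δ)
    (x y : M) (hy : MemIdeal M T.τ y) :
    σ (Δ x * y) = - σ (x * Δ y) := by
  obtain ⟨D, hD, h1, h2⟩ := hΔ x y
  rw [h1, h2]
  exact VNTrace.deriv_identity M T σ hσ D hD x y hy
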